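/- arXiv:dg-ga/9409003 — 3 statements merged into one kernel-verified Lean document; each statement's English description precedes it below -/
import Mathlib

section
/- Let 0 < α < 1 and let V : ℝ^m → ℝ^m be continuously differentiable on an open set U ⊆ ℝ^m, with the derivative map x ↦ DV(x) locally α-Hölder on U. Let W ⊆ ℝ^m be open, let I ⊆ ℝ be an open interval with 0 ∈ I, and let y : W × I → U be continuously differentiable and satisfy the initial value problem ∂y/∂t(x,t) = V(y(x,t)) for all (x,t) ∈ W × I and y(x,0) = x for all x ∈ W. Then y is of class C^{1,α} on W × I; that is, the total Fréchet derivative of y (as a function of the pair (x,t)) is locally α-Hölder on W × I. -/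
/-!
Write `A(x,t) = ∂y/∂x (x,t)`. The total derivative of `y` is
`(v, s) ↦ A(x,t) v + s V(y(x,t))`, and `V ∘ y` is `C¹`, hence locally Lipschitz and locally
`α`-Hölder; so everything reduces to `A`.

Since `∂y/∂t = V ∘ y` is `C¹`, the mixed derivatives can be exchanged
(`hasDerivAt_fderiv_comp_inl`), and `A` solves the linear equation `∂A/∂t = B A` with
`B = DV ∘ y` and `A(x,0) = id`. For two base points `x₁, x₂` near `x₀`,
`∂/∂t (A₁ - A₂) = B₁ (A₁ - A₂) + (B₁ - B₂) A₂`.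
As `y` is locally Lipschitz and `DV` locally `α`-Hölder, `B` is locally `α`-Hölder; by compactness
of time intervals, `A` and `B` are bounded and `B` is `α`-Hölder in `x`, uniformly in `t ∈ [a, b]`.
Grönwall's inequality then gives `‖A₁ - A₂‖ ≤ C ‖x₁ - x₂‖ ^ α`. In the time direction `A` is
Lipschitz because `∂A/∂t = B A` is bounded.
-/

open Set

/-- A map between normed spaces is *locally α-Hölder* on an open set `Ω` if every point of `Ω`
has a neighborhood `N ⊆ Ω` and a constant `C ≥ 0` such that
`‖f q − f r‖ ≤ C ‖q − r‖ ^ α` for all `q, r ∈ N`. -/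
def LocallyHolderOn {E F : Type*} [NormedAddCommGroup E] [NormedAddCommGroup F]
    (α : ℝ) (f : E → F) (Ω : Set E) : Prop :=
  ∀ p ∈ Ω, ∃ N ∈ nhds p, N ⊆ Ω ∧ ∃ C : ℝ, 0 ≤ C ∧
    ∀ q ∈ N, ∀ r ∈ N, ‖f q - f r‖ ≤ C * ‖q - r‖ ^ α

section Aux

/-! ### Local Hölder continuity and compactness in time -/

variable {E F G : Type*} [NormedAddCommGroup E] [NormedAddCommGroup F] [NormedAddCommGroup G]

theorem le_rpow_of_le_one {α s : ℝ} (hα0 : 0 < α) (hα1 : α < 1) (h0 : 0 ≤ s) (h1 : s ≤ 1) :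
    s ≤ s ^ α := by
  simpa using Real.rpow_le_rpow_of_exponent_ge' h0 h1 hα0.le hα1.le

/-- The requirement `N ⊆ Ω` can be dropped when `Ω` is open: replace `N` by `N ∩ Ω`. -/
theorem LocallyHolderOn.of_eventually {α : ℝ} {f : E → F} {Ω : Set E} (hΩ : IsOpen Ω)
    (h : ∀ p ∈ Ω, ∃ N ∈ nhds p, ∃ C : ℝ, 0 ≤ C ∧
      ∀ q ∈ N, ∀ r ∈ N, ‖f q - f r‖ ≤ C * ‖q - r‖ ^ α) : LocallyHolderOn α f Ω := by
  intro p hp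
  obtain ⟨N, hN, C, hC, H⟩ := h p hp
  exact ⟨N ∩ Ω, Filter.inter_mem hN (hΩ.mem_nhds hp), inter_subset_right, C, hC,
    fun q hq r hr => H q hq.1 r hr.1⟩

variable [NormedSpace ℝ E] [NormedSpace ℝ F]

theorem ContDiffOn.locallyHolderOn {α : ℝ} (hα0 : 0 < α) (hα1 : α < 1) {f : E → F} {Ω : Set E}
    (hΩ : IsOpen Ω) (hf : ContDiffOn ℝ 1 f Ω) : LocallyHolderOn α f Ω := by
  refine .of_eventually hΩ fun p hp => ?_
  obtain ⟨K, N, hN, hL⟩ := (hf.contDiffAt (hΩ.mem_nhds hp)).exists_lipschitzOnWith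
  refine ⟨N ∩ Metric.ball p (1 / 2), Filter.inter_mem hN (Metric.ball_mem_nhds _ (by norm_num)),
    K, K.2, fun q hq r hr => ?_⟩
  have h1 : ‖q - r‖ ≤ 1 := by
    have := dist_triangle_right q r p
    have h2 := Metric.mem_ball.1 hq.2
    have h3 := Metric.mem_ball.1 hr.2
    rw [dist_eq_norm] at this
    linarith
  calc ‖f q - f r‖ ≤ K * ‖q - r‖ := hL.norm_sub_le hq.1 hr.1
    _ ≤ K * ‖q - r‖ ^ α := by
      gcongr
      exact le_rpow_of_le_one hα0 hα1 (norm_nonneg _) h1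

theorem LocallyHolderOn.comp_contDiffOn {α : ℝ} (hα0 : 0 < α) {f : F → G} {g : E → F}
    {U : Set F} {Ω : Set E} (hΩ : IsOpen Ω) (hf : LocallyHolderOn α f U)
    (hg : ContDiffOn ℝ 1 g Ω) (hgU : ∀ p ∈ Ω, g p ∈ U) :
    LocallyHolderOn α (fun p => f (g p)) Ω := by
  refine .of_eventually hΩ fun p hp => ?_
  have hgp := hg.contDiffAt (hΩ.mem_nhds hp)
  obtain ⟨K, N, hN, hL⟩ := hgp.exists_lipschitzOnWith
  obtain ⟨N', hN', -, C, hC, H⟩ := hf (g p) (hgU p hp)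
  refine ⟨N ∩ g ⁻¹' N', Filter.inter_mem hN (hgp.continuousAt hN'), C * (K : ℝ) ^ α, by positivity,
    fun q hq r hr => ?_⟩
  calc ‖f (g q) - f (g r)‖ ≤ C * ‖g q - g r‖ ^ α := H _ hq.2 _ hr.2
    _ ≤ C * (K * ‖q - r‖) ^ α := by
      gcongr
      exact hL.norm_sub_le hq.1 hr.1
    _ = C * (K : ℝ) ^ α * ‖q - r‖ ^ α := by
      rw [Real.mul_rpow K.coe_nonneg (norm_nonneg _), mul_assoc]

omit [NormedSpace ℝ E] [NormedSpace ℝ F] in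
/-- A continuous function is bounded on `N × K` for some neighborhood `N` of `x₀`, if `K` is
compact. -/
theorem exists_bound_nhds_prod {f : E × ℝ → F} {x₀ : E} {K : Set ℝ} (hK : IsCompact K)
    (hf : ∀ s ∈ K, ContinuousAt f (x₀, s)) :
    ∃ N ∈ nhds x₀, ∃ M : ℝ, 0 < M ∧ ∀ x ∈ N, ∀ s ∈ K, ‖f (x, s)‖ ≤ M := by
  refine hK.induction_on (p := fun S => ∃ N ∈ nhds x₀, ∃ M : ℝ, 0 < M ∧
    ∀ x ∈ N, ∀ s ∈ S, ‖f (x, s)‖ ≤ M) ?_ ?_ ?_ ?_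
  · exact ⟨univ, Filter.univ_mem, 1, one_pos, by simp⟩
  · rintro S T hST ⟨N, hN, M, hM, H⟩
    exact ⟨N, hN, M, hM, fun x hx s hs => H x hx s (hST hs)⟩
  · rintro S T ⟨N, hN, M, hM, H⟩ ⟨N', hN', M', hM', H'⟩
    refine ⟨N ∩ N', Filter.inter_mem hN hN', max M M', lt_max_of_lt_left hM, ?_⟩
    rintro x ⟨hx, hx'⟩ s (hs | hs)
    · exact (H x hx s hs).trans (le_max_left _ _)
    · exact (H' x hx' s hs).trans (le_max_right _ _)
  · intro s hs
    have h1 : ∀ᶠ p in nhds (x₀, s), ‖f p‖ < ‖f (x₀, s)‖ + 1 :=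
      (hf s hs).norm.eventually_lt_const (lt_add_one _)
    obtain ⟨N, hN, T, hT, H⟩ := mem_nhds_prod_iff.1 h1
    exact ⟨T, mem_nhdsWithin_of_mem_nhds hT, N, hN, ‖f (x₀, s)‖ + 1, by positivity,
      fun x hx r hr => (H (mk_mem_prod hx hr)).le⟩

omit [NormedSpace ℝ E] [NormedSpace ℝ F] in
/-- Local Hölder continuity in `(x, s)` is Hölder continuity in `x` near `x₀`, uniformly for `s` in
a compact set. -/
theorem LocallyHolderOn.exists_uniform {α : ℝ} {f : E × ℝ → F} {Ω : Set (E × ℝ)} {x₀ : E}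
    {K : Set ℝ} (hK : IsCompact K) (hf : LocallyHolderOn α f Ω)
    (hKΩ : ∀ s ∈ K, (x₀, s) ∈ Ω) :
    ∃ N ∈ nhds x₀, ∃ C : ℝ, 0 ≤ C ∧ ∀ x ∈ N, ∀ x' ∈ N, ∀ s ∈ K,
      ‖f (x, s) - f (x', s)‖ ≤ C * ‖x - x'‖ ^ α := by
  refine hK.induction_on (p := fun S => ∃ N ∈ nhds x₀, ∃ C : ℝ, 0 ≤ C ∧ ∀ x ∈ N, ∀ x' ∈ N,
      ∀ s ∈ S, ‖f (x, s) - f (x', s)‖ ≤ C * ‖x - x'‖ ^ α) ?_ ?_ ?_ ?_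
  · exact ⟨univ, Filter.univ_mem, 0, le_rfl, by simp⟩
  · rintro S T hST ⟨N, hN, M, hM, H⟩
    exact ⟨N, hN, M, hM, fun x hx x' hx' s hs => H x hx x' hx' s (hST hs)⟩
  · rintro S T ⟨N, hN, M, hM, H⟩ ⟨N', hN', M', hM', H'⟩
    refine ⟨N ∩ N', Filter.inter_mem hN hN', max M M', le_max_of_le_left hM, ?_⟩
    rintro x ⟨hx, hx'⟩ z ⟨hz, hz'⟩ s (hs | hs)
    · refine (H x hx z hz s hs).trans ?_
      gcongr
      exact le_max_left _ _
    · refine (H' x hx' z hz' s hs).trans ?_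
      gcongr
      exact le_max_right _ _
  · intro s hs
    obtain ⟨N₀, hN₀, -, C, hC, H₀⟩ := hf _ (hKΩ s hs)
    obtain ⟨N, hN, T, hT, H⟩ := mem_nhds_prod_iff.1 hN₀
    refine ⟨T, mem_nhdsWithin_of_mem_nhds hT, N, hN, C, hC, fun x hx x' hx' r hr => ?_⟩
    simpa [Prod.norm_def] using H₀ _ (H (mk_mem_prod hx hr)) _ (H (mk_mem_prod hx' hr))

/-! ### Exchange of mixed derivatives -/

/-- Exchange of mixed derivatives: if `∂y/∂t = G` near `p` and `G` is strictly differentiable at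
`p`, then `∂/∂t (∂y/∂x) = ∂G/∂x` at `p`, although `y` itself need not be `C²`. -/
theorem hasDerivAt_fderiv_comp_inl {y g : E × ℝ → F} {g' : E × ℝ →L[ℝ] F} {x₀ : E} {t₀ : ℝ}
    (hy : ∀ᶠ q in nhds (x₀, t₀), DifferentiableAt ℝ y q)
    (hyt : ∀ᶠ q in nhds (x₀, t₀), HasDerivAt (fun s => y (q.1, s)) (g q) q.2)
    (hg : HasStrictFDerivAt g g' (x₀, t₀)) :
    HasDerivAt (fun t => fderiv ℝ y (x₀, t) ∘L ContinuousLinearMap.inl ℝ E ℝ)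
      (g' ∘L ContinuousLinearMap.inl ℝ E ℝ) t₀ := by
  rw [hasDerivAt_iff_isLittleO, Asymptotics.isLittleO_iff]
  intro ε hε
  have h1 := Asymptotics.isLittleO_iff.1 hg.isLittleO hε
  rw [nhds_prod_eq] at h1
  obtain ⟨P, hP, Q, hQ, hPQ⟩ := Filter.eventually_prod_iff.1 h1
  obtain ⟨δ, hδ, H⟩ := Metric.eventually_nhds_iff_ball.1 ((hP.and hQ).and (hy.and hyt))
  have hmem : ∀ x ∈ Metric.ball x₀ δ, ∀ t ∈ Metric.ball t₀ δ, (x, t) ∈ Metric.ball (x₀, t₀) δ := by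
    intro x hx t ht
    rw [← ball_prod_same]
    exact ⟨hx, ht⟩
  filter_upwards [Metric.ball_mem_nhds t₀ hδ] with t ht
  have hx₀ := Metric.mem_ball_self (x := x₀) hδ
  have ht₀ := Metric.mem_ball_self (x := t₀) hδ
  have hder : ∀ s ∈ Metric.ball t₀ δ, HasFDerivAt (fun x => y (x, s))
      (fderiv ℝ y (x₀, s) ∘L ContinuousLinearMap.inl ℝ E ℝ) x₀ := fun s hs =>
    (H _ (hmem _ hx₀ s hs)).2.1.hasFDerivAt.comp x₀ (hasFDerivAt_prodMk_left x₀ s)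
  have hlin : HasFDerivAt (fun x => (t - t₀) • (g' ∘L ContinuousLinearMap.inl ℝ E ℝ) x)
      ((t - t₀) • (g' ∘L ContinuousLinearMap.inl ℝ E ℝ)) x₀ :=
    (g' ∘L ContinuousLinearMap.inl ℝ E ℝ).hasFDerivAt.const_smul (t - t₀)
  -- It suffices that `x ↦ y (x, t) - y (x, t₀) - (t - t₀) g' (x, 0)` is `ε |t - t₀|`-Lipschitz
  -- at `x₀`; this follows from the mean value inequality in the time variable.
  refine (((hder t ht).sub (hder t₀ ht₀)).sub hlin).le_of_lip' (by positivity) ?_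
  filter_upwards [Metric.ball_mem_nhds x₀ hδ] with x hx
  have hmv := (convex_ball t₀ δ).norm_image_sub_le_of_norm_hasDerivWithin_le
    (f := fun s => y (x, s) - y (x₀, s) - (s - t₀) • g' (x - x₀, 0))
    (f' := fun s => g (x, s) - g (x₀, s) - g' (x - x₀, 0)) (C := ε * ‖x - x₀‖)
    (fun s hs => by
      have := ((H _ (hmem _ hx s hs)).2.2.sub (H _ (hmem _ hx₀ s hs)).2.2).sub
        (((hasDerivAt_id s).sub_const t₀).smul_const (g' (x - x₀, 0)))
      rw [one_smul] at this
      exact this.hasDerivWithinAt)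
    (fun s hs => by
      have := hPQ (H _ (hmem _ hx s hs)).1.1 (H _ (hmem _ hx₀ s hs)).1.2
      simpa [Prod.norm_def] using this) ht₀ ht
  calc _ = _ := by
        congr 1
        simp only [Pi.sub_apply, ContinuousLinearMap.comp_apply, ContinuousLinearMap.inl_apply,
          sub_self, zero_smul, sub_zero]
        have : g' (x - x₀, 0) = g' (x, 0) - g' (x₀, 0) := by
          rw [← map_sub]; simp
        rw [this, smul_sub]
        abel
    _ ≤ _ := hmv
    _ = _ := by ring

/-! ### Linear differential equations with Hölder coefficients -/

/-- Grönwall's inequality on an interval around the initial time `0`, forward and backward. -/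
theorem norm_le_of_hasDerivAt_of_zero {f f' : ℝ → F} {a b K ε : ℝ} (hK : 0 < K) (hε : 0 ≤ ε)
    (ha : a ≤ 0) (hb : 0 ≤ b) (hf : ∀ t ∈ Icc a b, HasDerivAt f (f' t) t) (h0 : f 0 = 0)
    (hbd : ∀ t ∈ Icc a b, ‖f' t‖ ≤ K * ‖f t‖ + ε) {t : ℝ} (ht : t ∈ Icc a b) :
    ‖f t‖ ≤ ε / K * (Real.exp (K * (b - a)) - 1) := by
  have key : ∀ s, 0 ≤ s → s ≤ b - a → gronwallBound 0 K ε (s - 0) ≤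
      ε / K * (Real.exp (K * (b - a)) - 1) := by
    intro s _ hs
    rw [gronwallBound_of_K_ne_0 hK.ne']
    simp only [zero_mul, zero_add, sub_zero]
    gcongr
  rcases le_total 0 t with h | h
  · have hsub : ∀ s ∈ Icc 0 b, s ∈ Icc a b := fun s hs => ⟨ha.trans hs.1, hs.2⟩
    refine (norm_le_gronwallBound_of_norm_deriv_right_le (f := f) (f' := f') (a := 0) (b := b)
      (δ := 0) (K := K) (ε := ε)
      (fun s hs => (hf s (hsub s hs)).continuousAt.continuousWithinAt)
      (fun s hs => (hf s (hsub s ⟨hs.1, hs.2.le⟩)).hasDerivWithinAt) (by simp [h0])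
      (fun s hs => hbd s (hsub s ⟨hs.1, hs.2.le⟩)) t ⟨h, ht.2⟩).trans
      (key t h (by linarith [ht.2]))
  · have hsub : ∀ s ∈ Icc 0 (-a), -s ∈ Icc a b := fun s hs =>
      ⟨by linarith [hs.2], by linarith [hs.1]⟩
    have hd : ∀ s ∈ Icc 0 (-a), HasDerivAt (fun r => f (-r)) (-f' (-s)) s := fun s hs => by
      have := (hf _ (hsub s hs)).scomp s (hasDerivAt_neg s)
      rw [neg_one_smul] at this
      exact this
    have := norm_le_gronwallBound_of_norm_deriv_right_le (f := fun r => f (-r))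
      (f' := fun r => -f' (-r)) (a := 0) (b := -a) (δ := 0) (K := K) (ε := ε)
      (fun s hs => (hd s hs).continuousAt.continuousWithinAt)
      (fun s hs => (hd s ⟨hs.1, hs.2.le⟩).hasDerivWithinAt) (by simp [h0])
      (fun s hs => by
        rw [norm_neg]
        exact hbd _ (hsub s ⟨hs.1, hs.2.le⟩)) (-t) ⟨by linarith, by linarith [ht.1]⟩
    rw [neg_neg] at this
    exact this.trans (key (-t) (by linarith) (by linarith [ht.1]))

/-- A solution `A` of the linear equation `∂A/∂t = B A` with `A(x,0)` constant in `x` is locally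
`α`-Hölder in `(x, t)` when the coefficient `B` is. -/
theorem locallyHolderOn_of_linear_ode {α : ℝ} (hα0 : 0 < α) (hα1 : α < 1)
    {W : Set E} (hW : IsOpen W) {I : Set ℝ} (hI : IsOpen I) (hIconn : I.OrdConnected)
    (h0I : (0 : ℝ) ∈ I) {A : E × ℝ → E →L[ℝ] F} {B : E × ℝ → F →L[ℝ] F}
    (hA : ContinuousOn A (W ×ˢ I)) (hB : ContinuousOn B (W ×ˢ I))
    (hBα : LocallyHolderOn α B (W ×ˢ I))
    (hode : ∀ x ∈ W, ∀ t ∈ I, HasDerivAt (fun s => A (x, s)) (B (x, t) ∘L A (x, t)) t)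
    {A₀ : E →L[ℝ] F} (hA0 : ∀ x ∈ W, A (x, 0) = A₀) :
    LocallyHolderOn α A (W ×ˢ I) := by
  have hΩ := hW.prod hI
  refine .of_eventually hΩ ?_
  rintro ⟨x₀, t₀⟩ ⟨hx₀, ht₀⟩
  obtain ⟨η, hη, hηI⟩ := Metric.nhds_basis_closedBall.mem_iff.1 (hI.mem_nhds ht₀)
  rw [Real.closedBall_eq_Icc] at hηI
  -- A compact time interval `[a, b] ⊆ I` containing `0` and a neighborhood of `t₀`.
  obtain ⟨a, b, ha, hb, hat, hbt, habI⟩ : ∃ a b : ℝ, a ≤ 0 ∧ 0 ≤ b ∧ a < t₀ ∧ t₀ < b ∧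
      Icc a b ⊆ I := by
    refine ⟨min 0 (t₀ - η), max 0 (t₀ + η), min_le_left _ _, le_max_left _ _,
      min_lt_of_right_lt (by linarith), lt_max_of_lt_right (by linarith), hIconn.out ?_ ?_⟩
    · rcases min_choice 0 (t₀ - η) with h | h <;> rw [h]
      exacts [h0I, hηI ⟨le_rfl, by linarith⟩]
    · rcases max_choice 0 (t₀ + η) with h | h <;> rw [h]
      exacts [h0I, hηI ⟨by linarith, le_rfl⟩]
  have hmem : ∀ s ∈ Icc a b, (x₀, s) ∈ W ×ˢ I := fun s hs => ⟨hx₀, habI hs⟩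
  obtain ⟨N₁, hN₁, M, hM, HA⟩ := exists_bound_nhds_prod isCompact_Icc
    fun s hs => hA.continuousAt (hΩ.mem_nhds (hmem s hs))
  obtain ⟨N₂, hN₂, L, hL, HB⟩ := exists_bound_nhds_prod isCompact_Icc
    fun s hs => hB.continuousAt (hΩ.mem_nhds (hmem s hs))
  obtain ⟨N₃, hN₃, C, hC, HC⟩ := hBα.exists_uniform isCompact_Icc hmem
  set D : ℝ := C * M / L * (Real.exp (L * (b - a)) - 1) with hD
  have hD0 : 0 ≤ D := by
    have : 1 ≤ Real.exp (L * (b - a)) := Real.one_le_exp (by nlinarith)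
    have : 0 ≤ Real.exp (L * (b - a)) - 1 := by linarith
    positivity
  set N := W ∩ (N₁ ∩ (N₂ ∩ N₃)) with hNdef
  have hN : N ∈ nhds x₀ := Filter.inter_mem (hW.mem_nhds hx₀)
    (Filter.inter_mem hN₁ (Filter.inter_mem hN₂ hN₃))
  have hspace : ∀ x ∈ N, ∀ z ∈ N, ∀ t ∈ Icc a b, ‖A (x, t) - A (z, t)‖ ≤ D * ‖x - z‖ ^ α := by
    intro x hx z hz t ht
    have := norm_le_of_hasDerivAt_of_zero (f := fun s => A (x, s) - A (z, s))
      (f' := fun s => B (x, s) ∘L A (x, s) - B (z, s) ∘L A (z, s))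
      (ε := C * ‖x - z‖ ^ α * M) hL (by positivity) ha hb
      (fun s hs => (hode x hx.1 s (habI hs)).sub (hode z hz.1 s (habI hs)))
      (by simp [hA0 x hx.1, hA0 z hz.1])
      (fun s hs => by
        have e : B (x, s) ∘L A (x, s) - B (z, s) ∘L A (z, s) =
            B (x, s) ∘L (A (x, s) - A (z, s)) + (B (x, s) - B (z, s)) ∘L A (z, s) := by
          rw [ContinuousLinearMap.comp_sub, ContinuousLinearMap.sub_comp]
          abel
        simp only [e]
        refine (norm_add_le _ _).trans (add_le_add ?_ ?_)
        · refine (ContinuousLinearMap.opNorm_comp_le _ _).trans ?_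
          gcongr
          exact HB x hx.2.2.1 s hs
        · refine (ContinuousLinearMap.opNorm_comp_le _ _).trans ?_
          gcongr
          · exact HC x hx.2.2.2 z hz.2.2.2 s hs
          · exact HA z hz.2.1 s hs) ht
    refine this.trans (le_of_eq ?_)
    rw [hD]
    ring
  have htime : ∀ x ∈ N, ∀ s ∈ Icc a b, ∀ t ∈ Icc a b,
      ‖A (x, s) - A (x, t)‖ ≤ L * M * ‖s - t‖ := by
    intro x hx s hs t ht
    refine (convex_Icc a b).norm_image_sub_le_of_norm_hasDerivWithin_le
      (f := fun r => A (x, r)) (f' := fun r => B (x, r) ∘L A (x, r))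
      (fun r hr => (hode x hx.1 r (habI hr)).hasDerivWithinAt) (fun r hr => ?_) ht hs
    refine (ContinuousLinearMap.opNorm_comp_le _ _).trans ?_
    gcongr
    exacts [HB x hx.2.2.1 r hr, HA x hx.2.1 r hr]
  refine ⟨(N ×ˢ Icc a b) ∩ Metric.ball (x₀, t₀) (1 / 2),
    Filter.inter_mem (prod_mem_nhds hN (Icc_mem_nhds hat hbt))
      (Metric.ball_mem_nhds _ (by norm_num)), D + L * M, by positivity, ?_⟩
  rintro ⟨x, s⟩ ⟨⟨hx, hs⟩, hxs⟩ ⟨z, t⟩ ⟨⟨hz, ht⟩, hzt⟩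
  simp only at hx hs hz ht
  have hdist : ‖(x, s) - (z, t)‖ ≤ 1 := by
    have := dist_triangle_right (x, s) (z, t) (x₀, t₀)
    have h2 := Metric.mem_ball.1 hxs
    have h3 := Metric.mem_ball.1 hzt
    rw [dist_eq_norm] at this
    linarith
  calc ‖A (x, s) - A (z, t)‖ ≤ ‖A (x, s) - A (z, s)‖ + ‖A (z, s) - A (z, t)‖ :=
        norm_sub_le_norm_sub_add_norm_sub _ _ _
    _ ≤ D * ‖x - z‖ ^ α + L * M * ‖s - t‖ :=
        add_le_add (hspace x hx z hz s hs) (htime z hz s hs t ht)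
    _ ≤ D * ‖(x, s) - (z, t)‖ ^ α + L * M * ‖(x, s) - (z, t)‖ ^ α := by
        gcongr
        · exact norm_fst_le ((x, s) - (z, t))
        · exact (norm_snd_le ((x, s) - (z, t))).trans
            (le_rpow_of_le_one hα0 hα1 (norm_nonneg _) hdist)
    _ = (D + L * M) * ‖(x, s) - (z, t)‖ ^ α := by ring

end Aux

/-! ### The flow -/

/-- Lemma A.1: the flow of a `C^{1,α}` vector field is `C^{1,α}` jointly in `(x, t)`. -/
theorem flow_of_C1alpha_vector_field_is_C1alpha
    {m : ℕ} {α : ℝ} (hα0 : 0 < α) (hα1 : α < 1)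
    (U : Set (EuclideanSpace ℝ (Fin m))) (hU : IsOpen U)
    (V : EuclideanSpace ℝ (Fin m) → EuclideanSpace ℝ (Fin m))
    (hV : ContDiffOn ℝ 1 V U)
    (hDV : LocallyHolderOn α (fderiv ℝ V) U)
    (W : Set (EuclideanSpace ℝ (Fin m))) (hW : IsOpen W)
    (I : Set ℝ) (hI : IsOpen I) (hIconn : I.OrdConnected) (h0I : (0 : ℝ) ∈ I)
    (y : EuclideanSpace ℝ (Fin m) × ℝ → EuclideanSpace ℝ (Fin m))
    (hy_range : ∀ p ∈ W ×ˢ I, y p ∈ U)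
    (hy_diff : ContDiffOn ℝ 1 y (W ×ˢ I))
    (hy_ode : ∀ x ∈ W, ∀ t ∈ I, HasDerivAt (fun s => y (x, s)) (V (y (x, t))) t)
    (hy_init : ∀ x ∈ W, y (x, 0) = x) :
    LocallyHolderOn α (fderiv ℝ y) (W ×ˢ I) := by
  have hΩ := hW.prod hI
  have hyd : ∀ p ∈ W ×ˢ I, DifferentiableAt ℝ y p := fun p hp =>
    (hy_diff.contDiffAt (hΩ.mem_nhds hp)).differentiableAt one_ne_zero
  have hVy : ContDiffOn ℝ 1 (fun p => V (y p)) (W ×ˢ I) := hV.comp hy_diff hy_range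
  have hVyα := hVy.locallyHolderOn hα0 hα1 hΩ
  have hBα := hDV.comp_contDiffOn hα0 hΩ hy_diff hy_range
  have hAα : LocallyHolderOn α
      (fun p => fderiv ℝ y p ∘L ContinuousLinearMap.inl ℝ (EuclideanSpace ℝ (Fin m)) ℝ)
      (W ×ˢ I) := by
    refine locallyHolderOn_of_linear_ode hα0 hα1 hW hI hIconn h0I
      (B := fun p => fderiv ℝ V (y p)) (A₀ := ContinuousLinearMap.id ℝ _) ?_ ?_ hBα ?_ ?_
    · exact (hy_diff.continuousOn_fderiv_of_isOpen hΩ le_rfl).clm_comp continuousOn_const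
    · exact (hV.continuousOn_fderiv_of_isOpen hU le_rfl).comp hy_diff.continuousOn hy_range
    · intro x hx t ht
      have hp : (x, t) ∈ W ×ˢ I := ⟨hx, ht⟩
      have hev : ∀ᶠ q in nhds (x, t), q ∈ W ×ˢ I := hΩ.mem_nhds hp
      have hVd : DifferentiableAt ℝ V (y (x, t)) :=
        (hV.contDiffAt (hU.mem_nhds (hy_range _ hp))).differentiableAt one_ne_zero
      have hg : HasStrictFDerivAt (fun p => V (y p))
          (fderiv ℝ V (y (x, t)) ∘L fderiv ℝ y (x, t)) (x, t) :=
        (hVy.contDiffAt (hΩ.mem_nhds hp)).hasStrictFDerivAt'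
          (hVd.hasFDerivAt.comp _ (hyd _ hp).hasFDerivAt) one_ne_zero
      exact hasDerivAt_fderiv_comp_inl (hev.mono hyd)
        (hev.mono fun q hq => hy_ode q.1 hq.1 q.2 hq.2) hg
    · intro x hx
      have h1 : HasFDerivAt (fun z => y (z, (0 : ℝ))) _ x :=
        (hyd (x, 0) ⟨hx, h0I⟩).hasFDerivAt.comp x (hasFDerivAt_prodMk_left x (0 : ℝ))
      have h2 : HasFDerivAt (fun z => y (z, (0 : ℝ))) (ContinuousLinearMap.id ℝ _) x := by
        refine (hasFDerivAt_id x).congr_of_eventuallyEq ?_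
        filter_upwards [hW.mem_nhds hx] with z hz
        exact hy_init z hz
      exact h1.unique h2
  have hdt : ∀ p ∈ W ×ˢ I, fderiv ℝ y p (0, 1) = V (y p) := by
    rintro ⟨x, t⟩ hp
    have h1 : HasDerivAt (fun s => y (x, s)) _ t :=
      ((hyd _ hp).hasFDerivAt.comp t (hasFDerivAt_prodMk_right x t)).hasDerivAt
    simpa using h1.unique (hy_ode x hp.1 t hp.2)
  intro p hp
  obtain ⟨N₁, hN₁, hN₁Ω, C₁, hC₁, H₁⟩ := hAα p hp
  obtain ⟨N₂, hN₂, -, C₂, hC₂, H₂⟩ := hVyα p hp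
  refine ⟨N₁ ∩ N₂, Filter.inter_mem hN₁ hN₂, inter_subset_left.trans hN₁Ω, C₁ + C₂,
    by positivity, fun q hq r hr => ?_⟩
  refine ContinuousLinearMap.opNorm_le_bound _ (by positivity) ?_
  rintro ⟨v, s⟩
  have hdec : (v, s) = ContinuousLinearMap.inl ℝ (EuclideanSpace ℝ (Fin m)) ℝ v +
      s • ((0 : EuclideanSpace ℝ (Fin m)), (1 : ℝ)) := by simp
  calc ‖(fderiv ℝ y q - fderiv ℝ y r) (v, s)‖
      = ‖(fderiv ℝ y q ∘L ContinuousLinearMap.inl ℝ _ ℝ -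
          fderiv ℝ y r ∘L ContinuousLinearMap.inl ℝ _ ℝ) v + s • (V (y q) - V (y r))‖ := by
        rw [← hdt q (hN₁Ω hq.1), ← hdt r (hN₁Ω hr.1), hdec, map_add, map_smul]
        rfl
    _ ≤ C₁ * ‖q - r‖ ^ α * ‖v‖ + ‖s‖ * (C₂ * ‖q - r‖ ^ α) := by
        refine (norm_add_le _ _).trans (add_le_add ?_ ?_)
        · exact ContinuousLinearMap.le_of_opNorm_le _ (H₁ q hq.1 r hr.1) v
        · rw [norm_smul]
          gcongr
          exact H₂ q hq.2 r hr.2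
    _ ≤ C₁ * ‖q - r‖ ^ α * ‖(v, s)‖ + ‖(v, s)‖ * (C₂ * ‖q - r‖ ^ α) := by
        gcongr
        · exact norm_fst_le (v, s)
        · exact norm_snd_le (v, s)
    _ = (C₁ + C₂) * ‖q - r‖ ^ α * ‖(v, s)‖ := by ring
end

section
/- Let E be a real normed vector space, F a real Banach space, X ⊆ E a set, T > 0, 0 < α ≤ 1, and K, C, M > 0. Let A : X × [0,T] → L(F,F) (continuous linear endomorphisms of F, with the operator norm) satisfy ‖A(x,t)‖ ≤ K for all (x,t) ∈ X × [0,T], and ‖A(x₁,t) − A(x₂,t)‖ ≤ C‖x₁ − x₂‖^α for all x₁, x₂ ∈ X and all t ∈ [0,T]. Suppose u : X × [0,T] → F is such that for each x ∈ X the map t ↦ u(x,t) is differentiable on [0,T] with ∂u/∂t(x,t) = A(x,t)(u(x,t)), that u(x₁,0) = u(x₂,0) for all x₁, x₂ ∈ X, and that ‖u(x,t)‖ ≤ M for all (x,t) ∈ X × [0,T]. Then for all x₁, x₂ ∈ X and all t ∈ [0,T], ‖u(x₁,t) − u(x₂,t)‖ ≤ (C M / K) · (e^{K t} − 1) · ‖x₁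 − x₂‖^α. In particular, for each fixed t the map x ↦ u(x,t) is α-Hölder on X. -/
open Set

/-!
The difference `w = u x₁ - u x₂` of two solutions vanishes at time `0` and satisfies
`w' = A x₁ w + (A x₁ - A x₂) (u x₂)`, hence `‖w'‖ ≤ K ‖w‖ + C M ‖x₁ - x₂‖ ^ α`.
Mathlib's Grönwall inequality `norm_le_gronwallBound_of_norm_deriv_right_le` bounds `‖w‖` by the
solution of `y' = K y + C M ‖x₁ - x₂‖ ^ α`, `y 0 = 0`, which is the stated right-hand side.
-/

/-- The Grönwall-type estimate from the proof of Lemma A.1: solutions of a linear ODE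
`∂u/∂t = A(x,t) u(x,t)` on `[0,T]`, with coefficient operator `A` bounded by `K` and
α-Hölder in the parameter `x` with constant `C`, all starting from the same initial value
and bounded by `M`, depend α-Hölder-continuously on the parameter, with constant
`(C M / K)(e^{K t} − 1)`. -/
theorem holder_dependence_of_linear_ode_solutions
    {E F : Type*} [NormedAddCommGroup E] [NormedSpace ℝ E]
    [NormedAddCommGroup F] [NormedSpace ℝ F]
    (X : Set E) (T : ℝ) (hT : 0 < T) (α K C M : ℝ)
    (hα0 : 0 < α) (hα1 : α ≤ 1) (hK : 0 < K) (hC : 0 < C) (hM : 0 < M)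
    (A : E → ℝ → (F →L[ℝ] F))
    (hAbd : ∀ x ∈ X, ∀ t ∈ Icc (0 : ℝ) T, ‖A x t‖ ≤ K)
    (hAhol : ∀ x₁ ∈ X, ∀ x₂ ∈ X, ∀ t ∈ Icc (0 : ℝ) T,
      ‖A x₁ t - A x₂ t‖ ≤ C * ‖x₁ - x₂‖ ^ α)
    (u : E → ℝ → F)
    (hu_ode : ∀ x ∈ X, ∀ t ∈ Icc (0 : ℝ) T,
      HasDerivWithinAt (u x) (A x t (u x t)) (Icc (0 : ℝ) T) t)
    (hu_init : ∀ x₁ ∈ X, ∀ x₂ ∈ X, u x₁ 0 = u x₂ 0)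
    (hu_bd : ∀ x ∈ X, ∀ t ∈ Icc (0 : ℝ) T, ‖u x t‖ ≤ M) :
    ∀ x₁ ∈ X, ∀ x₂ ∈ X, ∀ t ∈ Icc (0 : ℝ) T,
      ‖u x₁ t - u x₂ t‖ ≤
        (C * M / K) * (Real.exp (K * t) - 1) * ‖x₁ - x₂‖ ^ α := by
  intro x₁ h₁ x₂ h₂ t ht
  have hderiv : ∀ s ∈ Icc (0 : ℝ) T,
      HasDerivWithinAt (fun s => u x₁ s - u x₂ s)
        (A x₁ s (u x₁ s) - A x₂ s (u x₂ s)) (Icc (0 : ℝ) T) s :=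
    fun s hs => (hu_ode x₁ h₁ s hs).sub (hu_ode x₂ h₂ s hs)
  have hbound : ∀ s ∈ Ico (0 : ℝ) T,
      ‖A x₁ s (u x₁ s) - A x₂ s (u x₂ s)‖ ≤
        K * ‖u x₁ s - u x₂ s‖ + C * ‖x₁ - x₂‖ ^ α * M := by
    intro s hs
    have hs' := Ico_subset_Icc_self hs
    have hsplit : A x₁ s (u x₁ s) - A x₂ s (u x₂ s) =
        A x₁ s (u x₁ s - u x₂ s) + (A x₁ s - A x₂ s) (u x₂ s) := by
      simp
    rw [hsplit]
    exact norm_add_le_of_le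
      ((A x₁ s).le_of_opNorm_le (hAbd x₁ h₁ s hs') _)
      ((A x₁ s - A x₂ s).le_of_opNorm_le_of_le
        (hAhol x₁ h₁ x₂ h₂ s hs') (hu_bd x₂ h₂ s hs'))
  have hgron := norm_le_gronwallBound_of_norm_deriv_right_le (δ := 0)
    (fun s hs => (hderiv s hs).continuousWithinAt)
    (fun s hs => (hderiv s (Ico_subset_Icc_self hs)).mono_of_mem_nhdsWithin
      (Icc_mem_nhdsGE_of_mem hs))
    (by simp [hu_init x₁ h₁ x₂ h₂]) hbound t ht
  rw [gronwallBound_of_K_ne_0 hK.ne'] at hgron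
  refine hgron.trans_eq ?_
  rw [sub_zero]
  ring
end

section
/- Let 0 < α < 1, b > 0, let k ≥ 0 be an integer, and let f : ℝ → ℝ be of class C^{k+1} on the interval [0,b] (derivatives taken within the interval) with f(0) = 0, and suppose the (k+1)-st derivative f^{(k+1)} is α-Hölder on [0,b] with constant C, i.e. |f^{(k+1)}(x) − f^{(k+1)}(y)| ≤ C|x − y|^α for all x, y ∈ [0,b]. Define g : [0,b] → ℝ by g(x) = f(x)/x for x ∈ (0,b] and g(0) = f'(0). Then g is of class C^k on [0,b], and its k-th derivative g^{(k)} is α-Hölder on [0,b] with constant C/(k + α + 1); in fact g^{(k)}(x) = ∫₀¹ s^k f^{(k+1)}(s x) ds for x ∈ [0,b]. -/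
open Set

/-!
The fundamental theorem of calculus gives `f x = ∫₀ˣ f' = x ∫₀¹ f' (s x) ds`, so `g` agrees on
`[0,b]` with the weighted average `x ↦ ∫₀¹ f' (s x) ds`. More generally put
`I n h x = ∫₀¹ sⁿ h (s x) ds` (`radialAvg`). Differentiating under the integral sign gives
`(I n h)' = I (n + 1) h'` (`hasDerivWithinAt_radialAvg`), and iterating this `k` times with `h = f'`,
`n = 0` yields smoothness and the formula for `g^{(k)}` (`radialAvg_contDiffOn`). The Hölder
constant comes from `∫₀¹ s^k s^α ds = 1 / (k + α + 1)`.

One-sided derivatives at the ends of `[0,b]` are handled by replacing `h` with a `C¹` function on `ℝ`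
that agrees with it on `[0,b]`.
-/

/-- The weighted radial average `x ↦ ∫₀¹ sⁿ h (s x) ds`. -/
noncomputable def radialAvg (n : ℕ) (h : ℝ → ℝ) (x : ℝ) : ℝ :=
  ∫ s in (0 : ℝ)..1, s ^ n * h (s * x)

lemma mul_mem_Icc_of_mem {b s x : ℝ} (hs : s ∈ Icc (0 : ℝ) 1) (hx : x ∈ Icc (0 : ℝ) b) :
    s * x ∈ Icc (0 : ℝ) b :=
  ⟨mul_nonneg hs.1 hx.1, (mul_le_of_le_one_left hx.1 hs.2).trans hx.2⟩

lemma radialAvg_congr {b : ℝ} (n : ℕ) {h₁ h₂ : ℝ → ℝ} (h : EqOn h₁ h₂ (Icc 0 b)) :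
    EqOn (radialAvg n h₁) (radialAvg n h₂) (Icc 0 b) := by
  intro x hx
  refine intervalIntegral.integral_congr fun s hs => ?_
  rw [uIcc_of_le zero_le_one] at hs
  simp only [h (mul_mem_Icc_of_mem hs hx)]

/-- A continuous function on `[0,b]` extends continuously to `ℝ`. -/
lemma exists_continuous_eqOn {b : ℝ} (hb : 0 < b) {h : ℝ → ℝ} (hc : ContinuousOn h (Icc 0 b)) :
    ∃ H : ℝ → ℝ, Continuous H ∧ EqOn h H (Icc 0 b) :=
  ⟨IccExtend hb.le ((Icc 0 b).domRestrict h), hc.domRestrict.Icc_extend', fun x hx => by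
    rw [IccExtend_of_mem hb.le _ hx, domRestrict_apply]⟩

lemma radialAvg_continuousOn {b : ℝ} (hb : 0 < b) (n : ℕ) {h : ℝ → ℝ}
    (hc : ContinuousOn h (Icc 0 b)) : ContinuousOn (radialAvg n h) (Icc 0 b) := by
  obtain ⟨H, hH, hE⟩ := exists_continuous_eqOn hb hc
  refine ContinuousOn.congr (Continuous.continuousOn ?_) (radialAvg_congr n hE)
  exact intervalIntegral.continuous_parametric_intervalIntegral_of_continuous' (by fun_prop) 0 1

/-- Differentiation under the integral sign, for `C¹` functions on the whole line. -/
lemma hasDerivAt_radialAvg (n : ℕ) {h h' : ℝ → ℝ} (hd : ∀ x, HasDerivAt h (h' x) x)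
    (hc : Continuous h') (x : ℝ) :
    HasDerivAt (radialAvg n h) (radialAvg (n + 1) h' x) x := by
  have hcont : Continuous h := continuous_iff_continuousAt.2 fun y => (hd y).continuousAt
  -- On the compact set `[0,1] × closedBall x 1` the derivative of the integrand is bounded.
  obtain ⟨M, hM⟩ := (isCompact_Icc.prod (isCompact_closedBall x 1)).exists_bound_of_continuousOn
    (s := Icc (0 : ℝ) 1 ×ˢ Metric.closedBall x 1)
    (f := fun p : ℝ × ℝ => p.1 ^ (n + 1) * h' (p.1 * p.2)) (by fun_prop)
  refine (intervalIntegral.hasDerivAt_integral_of_dominated_loc_of_deriv_le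
    (F := fun x s => s ^ n * h (s * x)) (F' := fun x s => s ^ (n + 1) * h' (s * x))
    (bound := fun _ => M) (Metric.ball_mem_nhds x one_pos) ?_ ?_ ?_ ?_ ?_ ?_).2
  · exact .of_forall fun y => Continuous.aestronglyMeasurable (by fun_prop)
  · exact Continuous.intervalIntegrable (by fun_prop) _ _
  · exact Continuous.aestronglyMeasurable (by fun_prop)
  · refine .of_forall fun s hs y hy => ?_
    rw [uIoc_of_le zero_le_one] at hs
    exact hM (s, y) ⟨Ioc_subset_Icc_self hs, Metric.ball_subset_closedBall hy⟩
  · exact intervalIntegrable_const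
  · refine .of_forall fun s _ y _ => ?_
    have h1 : HasDerivAt (fun y : ℝ => s * y) s y := by
      simpa using (hasDerivAt_id y).const_mul s
    refine (((hd (s * y)).comp y h1).const_mul (s ^ n)).congr_deriv ?_
    ring

/-- If `h` has continuous derivative `h'` on `[0,b]`, it is the integral of `h'`. -/
lemma eq_add_integral {b : ℝ} {h h' : ℝ → ℝ}
    (hd : ∀ x ∈ Icc 0 b, HasDerivWithinAt h (h' x) (Icc 0 b) x)
    (hc : ContinuousOn h' (Icc 0 b)) {x : ℝ} (hx : x ∈ Icc 0 b) :
    h x = h 0 + ∫ t in (0 : ℝ)..x, h' t := by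
  have hsub : Icc 0 x ⊆ Icc 0 b := Icc_subset_Icc_right hx.2
  rw [intervalIntegral.integral_eq_sub_of_hasDerivAt_of_le hx.1
    (fun y hy => ((hd y (hsub hy)).continuousWithinAt).mono hsub)
    (fun y hy => (hd y (hsub (Ioo_subset_Icc_self hy))).hasDerivAt
      (Icc_mem_nhds hy.1 (hy.2.trans_le hx.2)))
    ((hc.mono hsub).intervalIntegrable_of_Icc hx.1)]
  ring

/-- Differentiation under the integral sign on `[0,b]`, with one-sided derivatives at the ends. -/
lemma hasDerivWithinAt_radialAvg {b : ℝ} (hb : 0 < b) (n : ℕ) {h h' : ℝ → ℝ}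
    (hd : ∀ x ∈ Icc 0 b, HasDerivWithinAt h (h' x) (Icc 0 b) x)
    (hc : ContinuousOn h' (Icc 0 b)) {x : ℝ} (hx : x ∈ Icc 0 b) :
    HasDerivWithinAt (radialAvg n h) (radialAvg (n + 1) h' x) (Icc 0 b) x := by
  obtain ⟨H', hH', hE'⟩ := exists_continuous_eqOn hb hc
  -- The primitive of the extension `H'` is a `C¹` extension of `h`.
  have hE : EqOn h (fun y => h 0 + ∫ t in (0 : ℝ)..y, H' t) (Icc 0 b) := by
    intro y hy
    rw [eq_add_integral hd hc hy]
    refine congrArg _ (intervalIntegral.integral_congr fun t ht => ?_)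
    rw [uIcc_of_le hy.1] at ht
    exact hE' ⟨ht.1, ht.2.trans hy.2⟩
  have hD := hasDerivAt_radialAvg n (fun y =>
    ((hH'.integral_hasStrictDerivAt 0 y).hasDerivAt.const_add (h 0))) hH' x
  rw [radialAvg_congr (n + 1) hE' hx]
  exact hD.hasDerivWithinAt.congr (radialAvg_congr n hE) (radialAvg_congr n hE hx)

/-- Iterated differentiation under the integral: `(I n h)^{(k)} = I (n + k) h^{(k)}` on `[0,b]`. -/
lemma radialAvg_contDiffOn {b : ℝ} (hb : 0 < b) (k : ℕ) : ∀ (n : ℕ) (h : ℝ → ℝ),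
    ContDiffOn ℝ k h (Icc 0 b) → ContDiffOn ℝ k (radialAvg n h) (Icc 0 b) ∧
      EqOn (iteratedDerivWithin k (radialAvg n h) (Icc 0 b))
        (radialAvg (n + k) (iteratedDerivWithin k h (Icc 0 b))) (Icc 0 b) := by
  have hu : UniqueDiffOn ℝ (Icc (0 : ℝ) b) := uniqueDiffOn_Icc hb
  induction k with
  | zero =>
    intro n h hh
    simp only [CharP.cast_eq_zero, contDiffOn_zero, iteratedDerivWithin_zero, add_zero] at hh ⊢
    exact ⟨radialAvg_continuousOn hb n hh, fun _ _ => rfl⟩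
  | succ k ih =>
    intro n h hh
    rw [Nat.cast_succ, contDiffOn_succ_iff_derivWithin hu] at hh
    obtain ⟨hd, -, hh⟩ := hh
    have hD : ∀ x ∈ Icc 0 b, HasDerivWithinAt (radialAvg n h)
        (radialAvg (n + 1) (derivWithin h (Icc 0 b)) x) (Icc 0 b) x := fun x hx =>
      hasDerivWithinAt_radialAvg hb n (fun y hy => (hd y hy).hasDerivWithinAt)
        hh.continuousOn hx
    have hE : EqOn (derivWithin (radialAvg n h) (Icc 0 b))
        (radialAvg (n + 1) (derivWithin h (Icc 0 b))) (Icc 0 b) := fun x hx =>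
      (hD x hx).derivWithin (hu x hx)
    obtain ⟨h1, h2⟩ := ih (n + 1) _ hh
    refine ⟨?_, fun x hx => ?_⟩
    · rw [Nat.cast_succ, contDiffOn_succ_iff_derivWithin hu]
      exact ⟨fun x hx => (hD x hx).differentiableWithinAt, by simp, h1.congr hE⟩
    · rw [iteratedDerivWithin_succ', iteratedDerivWithin_congr hE hx, h2 hx,
        show n + 1 + k = n + (k + 1) by ring]
      exact radialAvg_congr _ (fun y _ => by rw [iteratedDerivWithin_succ']) hx

/-- If `h` is `α`-Hölder on `[0,b]` with constant `C`, then `I k h` is so with constant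
`C / (k + α + 1)`, since `|h (s x) - h (s y)| ≤ C s^α |x - y|^α`. -/
lemma radialAvg_holder {α b C : ℝ} (hα0 : 0 < α) (k : ℕ) {h : ℝ → ℝ}
    (hc : ContinuousOn h (Icc 0 b))
    (hHold : ∀ x ∈ Icc (0 : ℝ) b, ∀ y ∈ Icc (0 : ℝ) b, |h x - h y| ≤ C * |x - y| ^ α)
    {x y : ℝ} (hx : x ∈ Icc 0 b) (hy : y ∈ Icc 0 b) :
    |radialAvg k h x - radialAvg k h y| ≤ (C / (k + α + 1)) * |x - y| ^ α := by
  have hint : ∀ z ∈ Icc 0 b,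
      IntervalIntegrable (fun s : ℝ => s ^ k * h (s * z)) MeasureTheory.volume 0 1 := fun z hz =>
    ContinuousOn.intervalIntegrable_of_Icc zero_le_one
      ((by fun_prop : ContinuousOn (fun s : ℝ => s ^ k) (Icc 0 1)).mul
        (hc.comp (by fun_prop) fun s hs => mul_mem_Icc_of_mem hs hz))
  have hk : (0 : ℝ) ≤ k := k.cast_nonneg
  have hI : ∫ s in (0 : ℝ)..1, s ^ ((k : ℝ) + α) * (C * |x - y| ^ α) =
      (C / (k + α + 1)) * |x - y| ^ α := by
    rw [intervalIntegral.integral_mul_const, integral_rpow (Or.inl (by linarith)),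
      Real.one_rpow, Real.zero_rpow (by linarith)]
    ring
  rw [radialAvg, radialAvg, ← intervalIntegral.integral_sub (hint x hx) (hint y hy), ← hI,
    ← Real.norm_eq_abs]
  refine intervalIntegral.norm_integral_le_of_norm_le zero_le_one (.of_forall fun s hs => ?_)
    ((intervalIntegral.intervalIntegrable_rpow' (by linarith)).mul_const _)
  have hs' := Ioc_subset_Icc_self hs
  have hH := hHold _ (mul_mem_Icc_of_mem hs' hx) _ (mul_mem_Icc_of_mem hs' hy)
  rw [← mul_sub, abs_mul, abs_of_pos hs.1, Real.mul_rpow hs.1.le (abs_nonneg _)] at hH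
  rw [← mul_sub, Real.norm_eq_abs, abs_mul, abs_of_pos (pow_pos hs.1 k), Real.rpow_add hs.1,
    Real.rpow_natCast, mul_assoc]
  exact mul_le_mul_of_nonneg_left (hH.trans_eq (by ring)) (pow_pos hs.1 k).le

/-- The general division principle: if `f` is `C^{k+1}` on `[0,b]` with `f(0) = 0` and
`f^{(k+1)}` α-Hölder on `[0,b]` with constant `C`, then `g(x) = f(x)/x` (with
`g(0) = f'(0)`) is `C^k` on `[0,b]`, its `k`-th derivative is α-Hölder on `[0,b]` with
constant `C/(k + α + 1)`, and in fact `g^{(k)}(x) = ∫₀¹ s^k f^{(k+1)}(s x) ds`. -/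
theorem div_by_x_is_Ck_holder
    {α b C : ℝ} (hα0 : 0 < α) (hα1 : α < 1) (hb : 0 < b) (hC : 0 ≤ C)
    (k : ℕ) (f : ℝ → ℝ)
    (hf : ContDiffOn ℝ (k + 1) f (Icc (0 : ℝ) b)) (hf0 : f 0 = 0)
    (hHold : ∀ x ∈ Icc (0 : ℝ) b, ∀ y ∈ Icc (0 : ℝ) b,
      |iteratedDerivWithin (k + 1) f (Icc (0 : ℝ) b) x -
        iteratedDerivWithin (k + 1) f (Icc (0 : ℝ) b) y| ≤ C * |x - y| ^ α)
    (g : ℝ → ℝ)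
    (hg : ∀ x ∈ Ioc (0 : ℝ) b, g x = f x / x)
    (hg0 : g 0 = derivWithin f (Icc (0 : ℝ) b) 0) :
    ContDiffOn ℝ k g (Icc (0 : ℝ) b) ∧
    (∀ x ∈ Icc (0 : ℝ) b, ∀ y ∈ Icc (0 : ℝ) b,
      |iteratedDerivWithin k g (Icc (0 : ℝ) b) x -
        iteratedDerivWithin k g (Icc (0 : ℝ) b) y| ≤ (C / (k + α + 1)) * |x - y| ^ α) ∧
    (∀ x ∈ Icc (0 : ℝ) b,
      iteratedDerivWithin k g (Icc (0 : ℝ) b) x =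
        ∫ s in (0 : ℝ)..1, s ^ k * iteratedDerivWithin (k + 1) f (Icc (0 : ℝ) b) (s * x)) := by
  have hu : UniqueDiffOn ℝ (Icc (0 : ℝ) b) := uniqueDiffOn_Icc hb
  have hf' := hf
  rw [contDiffOn_succ_iff_derivWithin hu] at hf'
  obtain ⟨hd, -, hf1⟩ := hf'
  have hgE : EqOn g (radialAvg 0 (derivWithin f (Icc 0 b))) (Icc 0 b) := by
    intro x hx
    rcases hx.1.eq_or_lt with rfl | hx0
    · simp [radialAvg, hg0]
    · rw [hg x ⟨hx0, hx.2⟩, eq_add_integral (fun y hy => (hd y hy).hasDerivWithinAt)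
        hf1.continuousOn hx, hf0, zero_add]
      have := intervalIntegral.mul_integral_comp_mul_right (a := 0) (b := 1)
        (f := derivWithin f (Icc 0 b)) x
      rw [zero_mul, one_mul] at this
      simp only [radialAvg, pow_zero, one_mul]
      rw [← this, mul_div_cancel_left₀ _ hx0.ne']
  obtain ⟨h1, h2⟩ := radialAvg_contDiffOn hb k 0 _ hf1
  have hform : EqOn (iteratedDerivWithin k g (Icc 0 b))
      (radialAvg k (iteratedDerivWithin (k + 1) f (Icc 0 b))) (Icc 0 b) := by
    intro x hx
    rw [iteratedDerivWithin_congr hgE hx, h2 hx, zero_add]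
    exact radialAvg_congr _ (fun y _ => by rw [iteratedDerivWithin_succ']) hx
  refine ⟨h1.congr hgE, fun x hx y hy => ?_, fun x hx => hform hx⟩
  rw [hform hx, hform hy]
  exact radialAvg_holder hα0 k
    (hf.continuousOn_iteratedDerivWithin (by norm_cast) hu) hHold hx hy
end
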